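/- Let v⁺, v⁻ : ℝ² → ℝ be three times continuously differentiable (ContDiff ℝ 3), fix (x,y) ∈ ℝ², and for each h > 0 let η_h ∈ [y−h, y] (the vertical intersection ordinate of the interface with the grid line). Define the jumps at (x, η_h) by [v] = v⁺(x,η_h) − v⁻(x,η_h), [v_y] = ∂_y v⁺(x,η_h) − ∂_y v⁻(x,η_h), [v_yy] = ∂_yy v⁺(x,η_h) − ∂_yy v⁻(x,η_h). Define the vertical truncation error at the interior node, E_h = (v⁻(x,y+h) + v⁺(x,y−h) − 2·v⁻(x,y))/h² − ∂_yy v⁻(x,y), and the correction C_h⁻ = (1/h²)·([v] + [v_y]·(y−h−η_h) + (1/2)·[v_yy]·(y−h−η_h)²). Then there exist constants C > 0 and δ > 0 such that for all 0 < h < δ and any choice of η_h ∈ [y−h, y], |E_h − C_h⁻| ≤ C·h. -/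

import Mathlib

/-!
Let `R f a b` be the remainder at `b` of the quadratic Taylor polynomial of `f` at `a`. The
correction is `h⁻²` times the Taylor polynomial at `η` of the jump, evaluated at `y - h`, so

  `h² (E_h - C_h⁻) = R vm y (y + h) + R vm y (y - h) + (R vp η (y - h) - R vm η (y - h))`.

Since `η` depends on `h`, each remainder has to be `O(h³)` uniformly in the base point: this comes
from applying the mean value inequality to the Taylor polynomial as a function of its base point.
-/

open Set Metric
open scoped Nat Topology

section Taylor

variable {E : Type*} [NormedAddCommGroup E] [NormedSpace ℝ E] {f : ℝ → E} {n : ℕ}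

lemma norm_sub_taylorWithinEval_le_of_convex {s : Set ℝ} (hs : Convex ℝ s)
    (hf : ContDiffOn ℝ (n + 1) f s) {C : ℝ}
    (hC : ∀ t ∈ s, ‖iteratedDerivWithin (n + 1) f s t‖ ≤ C) {a b : ℝ} (ha : a ∈ s) (hb : b ∈ s) :
    ‖f b - taylorWithinEval f n s a b‖ ≤ C / n ! * |b - a| ^ (n + 1) := by
  rcases s.eq_singleton_or_nontrivial ha with rfl | hnontrivial
  · simp [mem_singleton_iff.1 hb]
  have hunique : UniqueDiffOn ℝ s :=
    uniqueDiffOn_convex hs (hs.nontrivial_iff_nonempty_interior.1 hnontrivial)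
  have hsub : uIcc a b ⊆ s := hs.ordConnected.uIcc_subset ha hb
  have hderiv : ∀ t ∈ uIcc a b, HasDerivWithinAt (fun t ↦ taylorWithinEval f n s t b)
      (((n ! : ℝ)⁻¹ * (b - t) ^ n) • iteratedDerivWithin (n + 1) f s t) (uIcc a b) t :=
    fun t ht ↦ (hasDerivWithinAt_taylorWithinEval hunique self_mem_nhdsWithin (hsub ht) subset_rfl
      hf.of_succ (hf.differentiableOn_iteratedDerivWithin (mod_cast n.lt_succ_self) hunique t
        (hsub ht))).mono hsub
  have hbound : ∀ t ∈ uIcc a b,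
      ‖((n ! : ℝ)⁻¹ * (b - t) ^ n) • iteratedDerivWithin (n + 1) f s t‖ ≤
        C / n ! * |b - a| ^ n := by
    intro t ht
    calc ‖((n ! : ℝ)⁻¹ * (b - t) ^ n) • iteratedDerivWithin (n + 1) f s t‖
        = (n ! : ℝ)⁻¹ * |b - t| ^ n * ‖iteratedDerivWithin (n + 1) f s t‖ := by simp [norm_smul]
      _ ≤ (n ! : ℝ)⁻¹ * |b - a| ^ n * C := by
        gcongr ?_ * ?_ ^ n * ?_
        · exact abs_sub_right_of_mem_uIcc ht
        · exact hC t (hsub ht)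
      _ = C / n ! * |b - a| ^ n := by ring
  calc ‖f b - taylorWithinEval f n s a b‖
      = ‖taylorWithinEval f n s b b - taylorWithinEval f n s a b‖ := by rw [taylorWithinEval_self]
    _ ≤ C / n ! * |b - a| ^ n * ‖b - a‖ :=
      (convex_uIcc a b).norm_image_sub_le_of_norm_hasDerivWithin_le hderiv hbound
        left_mem_uIcc right_mem_uIcc
    _ = C / n ! * |b - a| ^ (n + 1) := by rw [Real.norm_eq_abs]; ring

lemma taylorWithinEval_univ_eq_of_isOpen {s : Set ℝ} (hs : IsOpen s) {a : ℝ} (ha : a ∈ s)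
    (b : ℝ) : taylorWithinEval f n univ a b = taylorWithinEval f n s a b := by
  simp only [taylor_within_apply, iteratedDerivWithin_univ, iteratedDerivWithin_of_isOpen hs ha]

lemma exists_norm_sub_taylorWithinEval_univ_le {x : ℝ} (hf : ContDiffAt ℝ (n + 1) f x) :
    ∃ M > 0, ∃ δ > 0, ∀ a ∈ ball x δ, ∀ b ∈ ball x δ,
      ‖f b - taylorWithinEval f n univ a b‖ ≤ M * |b - a| ^ (n + 1) := by
  have hcont : ContinuousAt (fun t ↦ ‖iteratedDeriv (n + 1) f t‖) x := by
    simpa only [norm_iteratedFDeriv_eq_norm_iteratedDeriv] using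
      (hf.continuousAt_iteratedFDeriv (k := n + 1) le_rfl).norm
  have hbounded : ∀ᶠ t in 𝓝 x, ‖iteratedDeriv (n + 1) f t‖ < ‖iteratedDeriv (n + 1) f x‖ + 1 :=
    hcont.eventually_lt_const (lt_add_one _)
  obtain ⟨δ, hδ, hball⟩ :=
    eventually_nhds_iff_ball.1 ((hf.eventually (by simp)).and hbounded)
  refine ⟨(‖iteratedDeriv (n + 1) f x‖ + 1) / n !, by positivity, δ, hδ, fun a ha b hb ↦ ?_⟩
  rw [taylorWithinEval_univ_eq_of_isOpen isOpen_ball ha]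
  refine norm_sub_taylorWithinEval_le_of_convex (convex_ball x δ)
    (fun t ht ↦ (hball t ht).1.contDiffWithinAt) (fun t ht ↦ ?_) ha hb
  rw [iteratedDerivWithin_of_isOpen isOpen_ball ht]
  exact (hball t ht).2.le

lemma exists_norm_sub_taylorWithinEval_univ_le_radius_pow {x : ℝ}
    (hf : ContDiffAt ℝ (n + 1) f x) :
    ∃ M > 0, ∃ δ > 0, ∀ r < δ, ∀ a ∈ closedBall x r, ∀ b ∈ closedBall x r,
      ‖f b - taylorWithinEval f n univ a b‖ ≤ M * r ^ (n + 1) := by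
  obtain ⟨M, hM, δ, hδ, hremainder⟩ := exists_norm_sub_taylorWithinEval_univ_le hf
  refine ⟨M * 2 ^ (n + 1), by positivity, δ, hδ, fun r hr a ha b hb ↦ ?_⟩
  have hab : |b - a| ≤ 2 * r := by
    rw [two_mul, ← Real.dist_eq]
    exact (dist_triangle_right b a x).trans (add_le_add hb ha)
  calc ‖f b - taylorWithinEval f n univ a b‖
      ≤ M * |b - a| ^ (n + 1) :=
        hremainder a (closedBall_subset_ball hr ha) b (closedBall_subset_ball hr hb)
    _ ≤ M * (2 * r) ^ (n + 1) := by gcongr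
    _ = M * 2 ^ (n + 1) * r ^ (n + 1) := by rw [mul_pow, mul_assoc]

lemma taylorWithinEval_two_univ (f : ℝ → E) (a b : ℝ) :
    taylorWithinEval f 2 univ a b =
      f a + (b - a) • deriv f a + ((1 / 2 : ℝ) * (b - a) ^ 2) • iteratedDeriv 2 f a := by
  norm_num [taylorWithinEval_succ, iteratedDerivWithin_univ]

end Taylor

section Correction

variable {E : Type*} [NormedAddCommGroup E] [NormedSpace ℝ E]

/-- The vertical truncation error `E_h` at an interior node of ordinate `y` whose lower neighbour
`y - h` is exterior. The arguments `vp` and `vm` are the restrictions of `v⁺` and `v⁻` to the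
vertical grid line through the node. -/
noncomputable def verticalTruncationError (vp vm : ℝ → E) (y h : ℝ) : E :=
  (h ^ 2)⁻¹ • (vm (y + h) + vp (y - h) - (2 : ℝ) • vm y) - iteratedDeriv 2 vm y

/-- The vertical correction `C_h⁻` at an interior node of ordinate `y`, built from the jumps
`[v]`, `[v_y]` and `[v_yy]` at the ordinate `η` where the interface crosses the grid line. -/
noncomputable def verticalCorrection (vp vm : ℝ → E) (y h η : ℝ) : E :=
  (h ^ 2)⁻¹ • ((vp η - vm η) + (y - h - η) • (deriv vp η - deriv vm η)
    + ((1 / 2 : ℝ) * (y - h - η) ^ 2) • (iteratedDeriv 2 vp η - iteratedDeriv 2 vm η))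

lemma verticalTruncationError_sub_verticalCorrection (vp vm : ℝ → E) (y η : ℝ) {h : ℝ}
    (hh : h ≠ 0) :
    verticalTruncationError vp vm y h - verticalCorrection vp vm y h η =
      (h ^ 2)⁻¹ • ((vm (y + h) - taylorWithinEval vm 2 univ y (y + h))
        + (vm (y - h) - taylorWithinEval vm 2 univ y (y - h))
        + ((vp (y - h) - taylorWithinEval vp 2 univ η (y - h))
          - (vm (y - h) - taylorWithinEval vm 2 univ η (y - h)))) := by
  simp only [verticalTruncationError, verticalCorrection, taylorWithinEval_two_univ]
  match_scalars <;> field_simp <;> ring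

theorem kfbi_vertical_correction_interior_first_order_general {vp vm : ℝ → E} {y : ℝ}
    (hvp : ContDiffAt ℝ 3 vp y) (hvm : ContDiffAt ℝ 3 vm y) :
    ∃ C > 0, ∃ δ > 0, ∀ h : ℝ, 0 < h → h < δ → ∀ η ∈ Icc (y - h) y,
      ‖verticalTruncationError vp vm y h - verticalCorrection vp vm y h η‖ ≤ C * h := by
  obtain ⟨P, hP, δp, hδp, hRp⟩ :=
    exists_norm_sub_taylorWithinEval_univ_le_radius_pow (n := 2) (by exact_mod_cast hvp)
  obtain ⟨M, hM, δm, hδm, hRm⟩ :=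
    exists_norm_sub_taylorWithinEval_univ_le_radius_pow (n := 2) (by exact_mod_cast hvm)
  refine ⟨M + M + (P + M), by positivity, min δp δm, lt_min hδp hδm,
    fun h h_pos hhδ η ⟨hη, hηy⟩ ↦ ?_⟩
  obtain ⟨hhp, hhm⟩ := lt_min_iff.1 hhδ
  have hy_mem : y ∈ closedBall y h := mem_closedBall_self h_pos.le
  have hup_mem : y + h ∈ closedBall y h := by simp [abs_of_pos h_pos]
  have hdown_mem : y - h ∈ closedBall y h := by simp [abs_of_pos h_pos]
  have hη_mem : η ∈ closedBall y h := by
    rw [Real.closedBall_eq_Icc]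
    exact ⟨hη, hηy.trans (by linarith)⟩
  rw [verticalTruncationError_sub_verticalCorrection vp vm y η h_pos.ne', norm_smul, norm_inv,
    norm_pow, Real.norm_of_nonneg h_pos.le, inv_mul_le_iff₀ (by positivity)]
  calc _ ≤ M * h ^ 3 + M * h ^ 3 + (P * h ^ 3 + M * h ^ 3) :=
        norm_add_le_of_le
          (norm_add_le_of_le (hRm h hhm y hy_mem _ hup_mem) (hRm h hhm y hy_mem _ hdown_mem))
          (norm_sub_le_of_le (hRp h hhp η hη_mem _ hdown_mem) (hRm h hhm η hη_mem _ hdown_mem))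
    _ = h ^ 2 * ((M + M + (P + M)) * h) := by ring

end Correction

/-- First-order accuracy of the KFBI vertical correction at an interior
irregular node: the corrected truncation error is `O(h)`. -/
theorem kfbi_vertical_correction_interior_first_order
    (vp vm : ℝ × ℝ → ℝ) (hvp : ContDiff ℝ 3 vp) (hvm : ContDiff ℝ 3 vm)
    (x y : ℝ) :
    ∃ C > 0, ∃ δ > 0, ∀ h : ℝ, 0 < h → h < δ →
      ∀ η : ℝ, η ∈ Set.Icc (y - h) y →
      |((vm (x, y + h) + vp (x, y - h) - 2 * vm (x, y)) / h ^ 2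
            - iteratedDeriv 2 (fun t => vm (x, t)) y)
        - ((1 / h ^ 2) *
            ((vp (x, η) - vm (x, η))
              + (deriv (fun t => vp (x, t)) η - deriv (fun t => vm (x, t)) η) * (y - h - η)
              + (1 / 2) *
                  (iteratedDeriv 2 (fun t => vp (x, t)) η
                    - iteratedDeriv 2 (fun t => vm (x, t)) η) * (y - h - η) ^ 2))|
        ≤ C * h := by
  obtain ⟨C, hC, δ, hδ, hbound⟩ := kfbi_vertical_correction_interior_first_order_general
    (vp := fun t ↦ vp (x, t)) (vm := fun t ↦ vm (x, t)) (y := y) (by fun_prop) (by fun_prop)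
  refine ⟨C, hC, δ, hδ, fun h h_pos hhδ η hη ↦ ?_⟩
  simpa [verticalTruncationError, verticalCorrection, div_eq_inv_mul, mul_comm, mul_left_comm,
    mul_assoc] using hbound h h_pos hhδ η hη
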